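/- arXiv:2009.00052 — 4 statements merged into one kernel-verified Lean document; each statement's English description precedes it below -/
import Mathlib

section
/- As the integer n → ∞, e^{−α n} ∫_0^n φ(s) e^{α s} A_s ds converges to λ_φ · A_∞, where λ_φ := (∫_0^1 φ(s) e^{α s} ds)/(e^α − 1). -/
open MeasureTheory Filter

/-!
Translation by one period multiplies `g s = φ s * exp (α * s)` by `r = exp α` and the deviation
`A s - A∞` by `r⁻¹`, so `g * (A - A∞)` is periodic and its integral over `n` periods is `n * C`,
which is `o(r ^ n)`. What remains is `A∞` times the integral of `g` over `n` periods, a geometric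
sum of ratio `r`.
-/

/-- `g` is quasi-periodic with period `T` and multiplier `r`: translation by `T` multiplies `g` by
`r`. A periodic function times `s ↦ exp (α * s)` has multiplier `exp (α * T)`. -/
def QuasiPeriodic {E : Type*} [SMul ℝ E] (g : ℝ → E) (T r : ℝ) : Prop :=
  ∀ s, g (s + T) = r • g s

theorem quasiPeriodic_exp_mul (α T : ℝ) :
    QuasiPeriodic (fun s => Real.exp (α * s)) T (Real.exp (α * T)) := fun s => by
  simp only [mul_add, Real.exp_add, smul_eq_mul, mul_comm]

section

variable {E : Type*} [NormedAddCommGroup E] [NormedSpace ℝ E]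

/-- The value `A∞ = (1 - r)⁻¹ • ∫ s in 0..T, f s` about which the primitive `t ↦ ∫ s in 0..t, f s`
of a function with period `T` and multiplier `r` is quasi-periodic; for `|r| < 1` it is the limit of
the primitive at infinity. At `r = 1` it has the junk value `0`. -/
noncomputable def primitiveCenter (f : ℝ → E) (T r : ℝ) : E :=
  (1 - r)⁻¹ • ∫ s in 0..T, f s

namespace QuasiPeriodic

variable {f : ℝ → E} {g : ℝ → ℝ} {T q r : ℝ}

theorem smul (hg : QuasiPeriodic g T q) (hf : QuasiPeriodic f T r) :
    QuasiPeriodic (fun s => g s • f s) T (q * r) := fun s => by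
  simp only [hg s, hf s, smul_eq_mul, smul_smul, mul_right_comm]

theorem smul_periodic (hg : QuasiPeriodic g T q) (hf : Function.Periodic f T) :
    QuasiPeriodic (fun s => g s • f s) T q := fun s => by
  simp only [hg s, hf s, smul_assoc]

theorem integral_add_period (hf : QuasiPeriodic f T r)
    (hfi : ∀ a b, IntervalIntegrable f volume a b) (t : ℝ) :
    ∫ s in 0..t + T, f s = (∫ s in 0..T, f s) + r • ∫ s in 0..t, f s := by
  have translate : ∫ s in T..t + T, f s = r • ∫ s in 0..t, f s := by
    rw [← intervalIntegral.integral_smul, ← funext hf,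
      intervalIntegral.integral_comp_add_right, zero_add]
  rw [← translate, intervalIntegral.integral_add_adjacent_intervals (hfi _ _) (hfi _ _)]

theorem integral_nat_mul_period (hf : QuasiPeriodic f T r)
    (hfi : ∀ a b, IntervalIntegrable f volume a b) (n : ℕ) :
    ∫ s in 0..n * T, f s = (∑ i ∈ Finset.range n, r ^ i) • ∫ s in 0..T, f s := by
  induction n with
  | zero => simp
  | succ n ih =>
    rw [Nat.cast_succ, add_one_mul, hf.integral_add_period hfi, ih, geom_sum_succ, smul_smul,
      add_smul, one_smul, add_comm]

theorem primitive_sub_primitiveCenter (hf : QuasiPeriodic f T r)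
    (hfi : ∀ a b, IntervalIntegrable f volume a b) (hr : r ≠ 1) :
    QuasiPeriodic (fun t => (∫ s in 0..t, f s) - primitiveCenter f T r) T r := by
  have fixed_point : (∫ s in 0..T, f s) + r • primitiveCenter f T r = primitiveCenter f T r := by
    have unscale : (1 - r) • primitiveCenter f T r = ∫ s in 0..T, f s :=
      smul_inv_smul₀ (sub_ne_zero.2 hr.symm) _
    rw [← unscale, ← add_smul, sub_add_cancel, one_smul]
  intro t
  dsimp only
  rw [hf.integral_add_period hfi, smul_sub]
  nth_rewrite 1 [← fixed_point]
  abel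

theorem integral_smul_primitive [CompleteSpace E] (hg : QuasiPeriodic g T r)
    (hf : QuasiPeriodic f T r⁻¹) (hgi : ∀ a b, IntervalIntegrable g volume a b)
    (hfi : ∀ a b, IntervalIntegrable f volume a b) (hr₀ : r ≠ 0) (hr₁ : r ≠ 1) (n : ℕ) :
    ∫ s in 0..n * T, g s • ∫ u in 0..s, f u =
      (n : ℝ) • (∫ s in 0..T, g s • ((∫ u in 0..s, f u) - primitiveCenter f T r⁻¹)) +
        (∑ i ∈ Finset.range n, r ^ i) • (∫ s in 0..T, g s) • primitiveCenter f T r⁻¹ := by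
  set center := primitiveCenter f T r⁻¹
  let deviation : ℝ → E := fun t => (∫ u in 0..t, f u) - center
  have product_periodic : QuasiPeriodic (fun s => g s • deviation s) T 1 := by
    simpa only [mul_inv_cancel₀ hr₀] using
      hg.smul (hf.primitive_sub_primitiveCenter hfi (inv_ne_one.2 hr₁))
  have deviation_continuous : Continuous deviation :=
    (intervalIntegral.continuous_primitive hfi 0).sub continuous_const
  have product_integrable (a b : ℝ) :
      IntervalIntegrable (fun s => g s • deviation s) volume a b :=
    (hgi a b).smul_continuousOn deviation_continuous.continuousOn
  calc ∫ s in 0..n * T, g s • ∫ u in 0..s, f u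
      = ∫ s in 0..n * T, (g s • deviation s + g s • center) := by
        simp only [deviation, ← smul_add, sub_add_cancel]
    _ = (∫ s in 0..n * T, g s • deviation s) + (∫ s in 0..n * T, g s) • center := by
        rw [intervalIntegral.integral_add (product_integrable _ _)
          ((hgi _ _).smul_continuousOn continuousOn_const), intervalIntegral.integral_smul_const]
    _ = (n : ℝ) • (∫ s in 0..T, g s • deviation s) +
          (∑ i ∈ Finset.range n, r ^ i) • (∫ s in 0..T, g s) • center := by
        rw [product_periodic.integral_nat_mul_period product_integrable,
          hg.integral_nat_mul_period hgi, smul_assoc]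
        simp only [one_pow, Finset.sum_const, Finset.card_range, nsmul_eq_mul, mul_one]

end QuasiPeriodic

theorem tendsto_inv_pow_mul_geom_sum {r : ℝ} (hr : 1 < |r|) :
    Tendsto (fun n : ℕ => r⁻¹ ^ n * ∑ i ∈ Finset.range n, r ^ i) atTop (nhds (r - 1)⁻¹) := by
  have r_ne_zero : r ≠ 0 := abs_pos.1 (one_pos.trans hr)
  have r_ne_one : r ≠ 1 := by rintro rfl; simp at hr
  have closed_form (n : ℕ) :
      r⁻¹ ^ n * ∑ i ∈ Finset.range n, r ^ i = (1 - r⁻¹ ^ n) * (r - 1)⁻¹ := by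
    rw [geom_sum_eq r_ne_one, div_eq_mul_inv, ← mul_assoc, mul_sub, ← mul_pow,
      inv_mul_cancel₀ r_ne_zero, one_pow, mul_one]
  have inv_pow_tendsto : Tendsto (fun n : ℕ => r⁻¹ ^ n) atTop (nhds 0) :=
    tendsto_pow_atTop_nhds_zero_of_abs_lt_one (by rw [abs_inv]; exact inv_lt_one_of_one_lt₀ hr)
  simpa only [closed_form, sub_zero, one_mul] using
    (inv_pow_tendsto.const_sub 1).mul_const (r - 1)⁻¹

theorem QuasiPeriodic.tendsto_inv_pow_smul_integral_smul_primitive [CompleteSpace E] {f : ℝ → E}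
    {g : ℝ → ℝ} {T r : ℝ} (hg : QuasiPeriodic g T r) (hf : QuasiPeriodic f T r⁻¹)
    (hgi : ∀ a b, IntervalIntegrable g volume a b) (hfi : ∀ a b, IntervalIntegrable f volume a b)
    (hr : 1 < |r|) :
    Tendsto (fun n : ℕ => r⁻¹ ^ n • ∫ s in 0..n * T, g s • ∫ u in 0..s, f u) atTop
      (nhds (((∫ s in 0..T, g s) / (r - 1)) • primitiveCenter f T r⁻¹)) := by
  have r_ne_zero : r ≠ 0 := abs_pos.1 (one_pos.trans hr)
  have r_ne_one : r ≠ 1 := by rintro rfl; simp at hr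
  have periodic_part : Tendsto (fun n : ℕ => (n : ℝ) * r⁻¹ ^ n) atTop (nhds 0) :=
    tendsto_self_mul_const_pow_of_abs_lt_one (by rw [abs_inv]; exact inv_lt_one_of_one_lt₀ hr)
  have limit_of_parts := (periodic_part.smul_const
      (∫ s in 0..T, g s • ((∫ u in 0..s, f u) - primitiveCenter f T r⁻¹))).add
    ((tendsto_inv_pow_mul_geom_sum hr).smul_const
      ((∫ s in 0..T, g s) • primitiveCenter f T r⁻¹))
  rw [zero_smul, zero_add, smul_smul, inv_mul_eq_div] at limit_of_parts
  refine limit_of_parts.congr fun n => ?_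
  rw [hg.integral_smul_primitive hf hgi hfi r_ne_zero r_ne_one, smul_add, mul_comm (n : ℝ),
    mul_smul, mul_smul]

theorem stmt_5_general [CompleteSpace E] {α T : ℝ} (hα : 0 < α) (hT : 0 < T) {L : ℝ → E}
    (hL : Function.Periodic L T) (hLi : IntervalIntegrable L volume 0 T) {φ : ℝ → ℝ}
    (hφ : Function.Periodic φ T) (hφi : IntervalIntegrable φ volume 0 T) :
    Tendsto (fun n : ℕ => Real.exp (-α * (n * T)) •
        ∫ s in 0..n * T, (φ s * Real.exp (α * s)) • ∫ u in 0..s, Real.exp (-α * u) • L u)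
      atTop (nhds (((∫ s in 0..T, φ s * Real.exp (α * s)) / (Real.exp (α * T) - 1)) •
        (1 - Real.exp (-α * T))⁻¹ • ∫ u in 0..T, Real.exp (-α * u) • L u)) := by
  have inv_exp : Real.exp (-α * T) = (Real.exp (α * T))⁻¹ := by rw [neg_mul, Real.exp_neg]
  have weight_multiplier :
      QuasiPeriodic (fun s => φ s * Real.exp (α * s)) T (Real.exp (α * T)) := by
    simpa only [smul_eq_mul, mul_comm] using (quasiPeriodic_exp_mul α T).smul_periodic hφ
  have integrand_multiplier :
      QuasiPeriodic (fun u => Real.exp (-α * u) • L u) T (Real.exp (α * T))⁻¹ :=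
    inv_exp ▸ (quasiPeriodic_exp_mul (-α) T).smul_periodic hL
  have multiplier_gt_one : 1 < |Real.exp (α * T)| := by
    rw [Real.abs_exp]
    exact Real.one_lt_exp_iff.2 (mul_pos hα hT)
  have limit := weight_multiplier.tendsto_inv_pow_smul_integral_smul_primitive integrand_multiplier
    (fun a b => (hφ.intervalIntegrable₀ hT.ne' hφi a b).mul_continuousOn (by fun_prop))
    (fun a b => (hL.intervalIntegrable₀ hT.ne' hLi a b).continuousOn_smul (by fun_prop))
    multiplier_gt_one
  simpa only [primitiveCenter, ← inv_exp, ← Real.exp_nat_mul, mul_left_comm] using limit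

end

/-- As the integer `n → ∞`, `e^{-α n} ∫_0^n φ(s) e^{α s} A_s ds` converges to
`λ_φ · A_∞`, where `λ_φ := (∫_0^1 φ(s) e^{α s} ds) / (e^α - 1)`. -/
theorem stmt_5 (α : ℝ) (hα : 0 < α) (L : ℝ → ℝ)
    (hLmeas : Measurable L) (hLbdd : ∃ M : ℝ, ∀ t : ℝ, |L t| ≤ M)
    (hLper : ∀ t : ℝ, L (t + 1) = L t)
    (A : ℝ → ℝ) (hA : ∀ t : ℝ, A t = ∫ s in (0:ℝ)..t, Real.exp (-α * s) * L s)
    (Ainf : ℝ) (hAinf : Ainf = A 1 / (1 - Real.exp (-α)))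
    (φ : ℝ → ℝ)
    (hφmeas : Measurable φ) (hφbdd : ∃ M : ℝ, ∀ t : ℝ, |φ t| ≤ M)
    (hφper : ∀ t : ℝ, φ (t + 1) = φ t)
    (lφ : ℝ) (hlφ : lφ = (∫ s in (0:ℝ)..1, φ s * Real.exp (α * s)) / (Real.exp α - 1)) :
    Tendsto (fun n : ℕ =>
        Real.exp (-α * n) * ∫ s in (0:ℝ)..(n:ℝ), φ s * Real.exp (α * s) * A s)
      atTop (nhds (lφ * Ainf)) := by
  have integrable {f : ℝ → ℝ} (hf : Measurable f) : (∃ M, ∀ t, |f t| ≤ M) →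
      IntervalIntegrable f volume 0 1 := fun ⟨_, hM⟩ =>
    intervalIntegrable_const.mono_fun' hf.aestronglyMeasurable (ae_of_all _ hM)
  simpa only [smul_eq_mul, mul_one, ← hA, ← hlφ, hAinf, div_eq_inv_mul (A 1)] using
    stmt_5_general hα one_pos hLper (integrable hLmeas hLbdd) hφper (integrable hφmeas hφbdd)
end

section
/- Almost surely the function s ↦ e^{−α s} B_s(ω) is integrable on [0, ∞), and Z_t converges to Z_∞ := ∫_0^∞ e^{−α s} B_s ds as t → ∞ both almost surely and in L²(Ω), i.e. E[(Z_t − Z_∞)²] → 0. -/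
open MeasureTheory ProbabilityTheory Filter

/-!
Fubini and Cauchy–Schwarz give Minkowski's integral inequality
`‖∫ Y_s ds‖_{L²} ≤ ∫ ‖Y_s‖_{L²} ds`. Hence, as soon as `∫_a^∞ ‖Y_s‖_{L²} ds < ∞`, almost every path
of `Y` is integrable on `[a, ∞)`, and the `L²`-distance from `∫_a^t Y_s ds` to `∫_a^∞ Y_s ds` is at
most the tail `∫_t^∞ ‖Y_s‖_{L²} ds`. For `Y_s = e^{-αs} B_s` with `E[B_s²] = s^{2H}` the integral
`∫_0^∞ ‖Y_s‖_{L²} ds = ∫_0^∞ s^H e^{-αs} ds` is a Gamma integral.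
-/

open Set Function Topology
open scoped ENNReal

section MinkowskiInequality

lemma sq_eLpNorm_two_eq_lintegral {Ω ε : Type*} {mΩ : MeasurableSpace Ω} [ENorm ε]
    (μ : Measure Ω) (f : Ω → ε) : eLpNorm f 2 μ ^ 2 = ∫⁻ ω, ‖f ω‖ₑ ^ 2 ∂μ := by
  simpa using eLpNorm_nnreal_pow_eq_lintegral (f := f) (μ := μ) (p := 2) two_ne_zero

lemma lintegral_mul_le_eLpNorm_two_mul_eLpNorm_two {Ω : Type*} {mΩ : MeasurableSpace Ω}
    {μ : Measure Ω} {f g : Ω → ℝ≥0∞} (hf : AEMeasurable f μ) (hg : AEMeasurable g μ) :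
    ∫⁻ ω, f ω * g ω ∂μ ≤ eLpNorm f 2 μ * eLpNorm g 2 μ := by
  simpa [eLpNorm_eq_lintegral_rpow_enorm_toReal] using
    ENNReal.lintegral_mul_le_Lp_mul_Lq μ .two_two hf hg

lemma aemeasurable_eLpNorm_two {S Ω : Type*} {mS : MeasurableSpace S} {mΩ : MeasurableSpace Ω}
    {ν : Measure S} {μ : Measure Ω} [SFinite μ] {f : S → Ω → ℝ≥0∞}
    (hf : AEMeasurable (uncurry f) (ν.prod μ)) : AEMeasurable (fun s => eLpNorm (f s) 2 μ) ν := by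
  simpa [eLpNorm_eq_lintegral_rpow_enorm_toReal] using
    (hf.pow_const 2).lintegral_prod_right'.pow_const 2⁻¹

variable {S Ω E : Type*} {mS : MeasurableSpace S} {mΩ : MeasurableSpace Ω} {ν : Measure S}
  {μ : Measure Ω} [SFinite ν] [SFinite μ] [NormedAddCommGroup E]

lemma lintegral_mul_lintegral_eq_lintegral_lintegral_mul {f : S → Ω → ℝ≥0∞} {g : Ω → ℝ≥0∞}
    (hf : AEMeasurable (uncurry f) (ν.prod μ)) (hg : AEMeasurable g μ) :
    ∫⁻ ω, g ω * ∫⁻ s, f s ω ∂ν ∂μ = ∫⁻ s, ∫⁻ ω, g ω * f s ω ∂μ ∂ν := by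
  calc ∫⁻ ω, g ω * ∫⁻ s, f s ω ∂ν ∂μ
      = ∫⁻ ω, ∫⁻ s, g ω * f s ω ∂ν ∂μ := by
        refine lintegral_congr_ae ?_
        filter_upwards [hf.prod_swap.aestronglyMeasurable.prodMk_left] with ω hω
        exact (lintegral_const_mul'' _ hω.aemeasurable).symm
    _ = ∫⁻ s, ∫⁻ ω, g ω * f s ω ∂μ ∂ν :=
        lintegral_lintegral_swap (hg.comp_fst.mul hf.prod_swap)

lemma lintegral_mul_lintegral_le {f : S → Ω → ℝ≥0∞} {g : Ω → ℝ≥0∞}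
    (hf : AEMeasurable (uncurry f) (ν.prod μ)) (hg : AEMeasurable g μ) :
    ∫⁻ ω, g ω * ∫⁻ s, f s ω ∂ν ∂μ ≤ eLpNorm g 2 μ * ∫⁻ s, eLpNorm (f s) 2 μ ∂ν := by
  rw [lintegral_mul_lintegral_eq_lintegral_lintegral_mul hf hg,
    ← lintegral_const_mul'' _ (aemeasurable_eLpNorm_two hf)]
  refine lintegral_mono_ae ?_
  filter_upwards [hf.aestronglyMeasurable.prodMk_left] with s hs
  exact lintegral_mul_le_eLpNorm_two_mul_eLpNorm_two hg hs.aemeasurable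

-- Pairing `F = ∫ f_s ds` with each `f_s`, not with `F` itself, avoids dividing by the possibly
-- infinite `‖F‖_{L²}`.
theorem eLpNorm_two_lintegral_le {f : S → Ω → ℝ≥0∞} (hf : AEMeasurable (uncurry f) (ν.prod μ)) :
    eLpNorm (fun ω => ∫⁻ s, f s ω ∂ν) 2 μ ≤ ∫⁻ s, eLpNorm (f s) 2 μ ∂ν := by
  have hF : AEMeasurable (fun ω => ∫⁻ s, f s ω ∂ν) μ := hf.lintegral_prod_left'
  rw [← ENNReal.pow_le_pow_left_iff two_ne_zero, sq_eLpNorm_two_eq_lintegral]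
  calc ∫⁻ ω, ‖∫⁻ s, f s ω ∂ν‖ₑ ^ 2 ∂μ
      = ∫⁻ ω, (∫⁻ r, f r ω ∂ν) * ∫⁻ s, f s ω ∂ν ∂μ := by simp only [enorm_eq_self, sq]
    _ = ∫⁻ s, ∫⁻ ω, f s ω * ∫⁻ r, f r ω ∂ν ∂μ ∂ν := by
        simp only [lintegral_mul_lintegral_eq_lintegral_lintegral_mul hf hF, mul_comm]
    _ ≤ ∫⁻ s, eLpNorm (f s) 2 μ * ∫⁻ r, eLpNorm (f r) 2 μ ∂ν ∂ν := by
        refine lintegral_mono_ae ?_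
        filter_upwards [hf.aestronglyMeasurable.prodMk_left] with s hs
        exact lintegral_mul_lintegral_le hf hs.aemeasurable
    _ = (∫⁻ s, eLpNorm (f s) 2 μ ∂ν) ^ 2 := by
        rw [lintegral_mul_const'' _ (aemeasurable_eLpNorm_two hf), sq]

variable {Y : S → Ω → E}

lemma eLpNorm_two_lintegral_enorm_le (hY : AEStronglyMeasurable (uncurry Y) (ν.prod μ)) :
    eLpNorm (fun ω => ∫⁻ s, ‖Y s ω‖ₑ ∂ν) 2 μ ≤ ∫⁻ s, eLpNorm (Y s) 2 μ ∂ν := by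
  simpa only [eLpNorm_enorm] using eLpNorm_two_lintegral_le (f := fun s ω => ‖Y s ω‖ₑ) hY.enorm

theorem eLpNorm_two_integral_le [NormedSpace ℝ E]
    (hY : AEStronglyMeasurable (uncurry Y) (ν.prod μ)) :
    eLpNorm (fun ω => ∫ s, Y s ω ∂ν) 2 μ ≤ ∫⁻ s, eLpNorm (Y s) 2 μ ∂ν :=
  (eLpNorm_mono_enorm fun _ => enorm_integral_le_lintegral_enorm _).trans
    (eLpNorm_two_lintegral_enorm_le hY)

theorem ae_integrable_of_lintegral_eLpNorm_two_ne_top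
    (hY : AEStronglyMeasurable (uncurry Y) (ν.prod μ))
    (hfin : ∫⁻ s, eLpNorm (Y s) 2 μ ∂ν ≠ ∞) : ∀ᵐ ω ∂μ, Integrable (Y · ω) ν := by
  have hF : AEMeasurable (fun ω => ∫⁻ s, ‖Y s ω‖ₑ ∂ν) μ := hY.enorm.lintegral_prod_left'
  have hF_sq : ∫⁻ ω, ‖∫⁻ s, ‖Y s ω‖ₑ ∂ν‖ₑ ^ 2 ∂μ ≠ ∞ := by
    rw [← sq_eLpNorm_two_eq_lintegral]
    exact ENNReal.pow_ne_top (ne_top_of_le_ne_top hfin (eLpNorm_two_lintegral_enorm_le hY))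
  filter_upwards [ae_lt_top' (hF.enorm.pow_const 2) hF_sq, hY.prod_swap.prodMk_left] with ω hω hYω
  exact ⟨hYω, by simpa [HasFiniteIntegral] using hω⟩

end MinkowskiInequality

section ImproperIntegral

lemma tendsto_setLIntegral_Ioi_atTop {S : Type*} [MeasurableSpace S] [TopologicalSpace S]
    [LinearOrder S] [OrderClosedTopology S] [OpensMeasurableSpace S] [NoMaxOrder S]
    [(atTop : Filter S).IsCountablyGenerated] {ν : Measure S} {g : S → ℝ≥0∞} {a : S}
    (hg : ∫⁻ s in Ioi a, g s ∂ν ≠ ∞) :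
    Tendsto (fun t => ∫⁻ s in Ioi t, g s ∂ν) atTop (𝓝 0) := by
  have hinter : ⋂ t : S, Ioi t = ∅ :=
    eq_empty_of_forall_notMem fun s hs => lt_irrefl s (mem_iInter.1 hs s)
  have hlim := tendsto_measure_iInter_atTop (μ := ν.withDensity g)
    (fun _ => measurableSet_Ioi.nullMeasurableSet) antitone_Ioi
    ⟨a, by rwa [withDensity_apply _ measurableSet_Ioi]⟩
  simpa only [comp_def, withDensity_apply _ measurableSet_Ioi, hinter, measure_empty] using hlim

theorem tendsto_eLpNorm_two_intervalIntegral_sub_integral_Ioi {Ω E : Type*} [MeasurableSpace Ω]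
    {μ : Measure Ω} [SFinite μ] {ν : Measure ℝ} [SFinite ν] [NormedAddCommGroup E]
    [NormedSpace ℝ E] {Y : ℝ → Ω → E} {a : ℝ}
    (hY : AEStronglyMeasurable (uncurry Y) ((ν.restrict (Ioi a)).prod μ))
    (hfin : ∫⁻ s in Ioi a, eLpNorm (Y s) 2 μ ∂ν ≠ ∞) :
    Tendsto (fun t => eLpNorm (fun ω => ∫ s in a..t, Y s ω ∂ν - ∫ s in Ioi a, Y s ω ∂ν) 2 μ)
      atTop (𝓝 0) := by
  refine tendsto_of_tendsto_of_tendsto_of_le_of_le' tendsto_const_nhds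
    (tendsto_setLIntegral_Ioi_atTop hfin) (Eventually.of_forall fun _ => zero_le) ?_
  filter_upwards [eventually_ge_atTop a] with t hat
  have htail : (fun ω => ∫ s in a..t, Y s ω ∂ν - ∫ s in Ioi a, Y s ω ∂ν) =ᵐ[μ]
      -fun ω => ∫ s in Ioi t, Y s ω ∂ν := by
    filter_upwards [ae_integrable_of_lintegral_eLpNorm_two_ne_top hY hfin] with ω hω
    simp [← intervalIntegral.integral_Ioi_sub_Ioi hω hat]
  have hac : ν.restrict (Ioi t) ≪ ν.restrict (Ioi a) :=
    Measure.absolutelyContinuous_of_le (Measure.restrict_mono (Ioi_subset_Ioi hat) le_rfl)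
  rw [eLpNorm_congr_ae htail, eLpNorm_neg]
  exact eLpNorm_two_integral_le (hY.mono_ac (hac.prod .rfl))

end ImproperIntegral

lemma aestronglyMeasurable_uncurry_of_ae_continuousOn {ι Ω E : Type*} [TopologicalSpace ι]
    [TopologicalSpace.MetrizableSpace ι] [SecondCountableTopology ι] [MeasurableSpace ι]
    [OpensMeasurableSpace ι] [MeasurableSpace Ω] [TopologicalSpace E]
    [TopologicalSpace.PseudoMetrizableSpace E] {ν : Measure ι} [SFinite ν] {μ : Measure Ω}
    [SFinite μ] {Y : ι → Ω → E} {T : Set ι} (hT : MeasurableSet T)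
    (hmeas : ∀ i ∈ T, StronglyMeasurable (Y i)) (hcont : ∀ᵐ ω ∂μ, ContinuousOn (Y · ω) T) :
    AEStronglyMeasurable (uncurry Y) ((ν.restrict T).prod μ) := by
  obtain ⟨G, hG, hGmeas, hGcont⟩ := hcont.exists_measurable_mem
  have hemb : MeasurableEmbedding (Prod.map Subtype.val Subtype.val : T × G → ι × Ω) :=
    (MeasurableEmbedding.subtype_coe hT).prodMap (MeasurableEmbedding.subtype_coe hGmeas)
  have hYTG : StronglyMeasurable (uncurry fun (i : T) (ω : G) => Y i ω) :=
    stronglyMeasurable_uncurry_of_continuous_of_stronglyMeasurable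
      (fun ω => (hGcont ω ω.2).domRestrict)
      (fun i => (hmeas i i.2).comp_measurable measurable_subtype_coe)
  have hrestrict : (ν.restrict T).prod μ = (ν.prod μ).restrict (range (Prod.map
      (Subtype.val : T → ι) (Subtype.val : G → Ω))) := by
    rw [range_prodMap, Subtype.range_coe, Subtype.range_coe, ← Measure.prod_restrict,
      Measure.restrict_eq_self_of_ae_mem hG]
  rw [hrestrict, ← hemb.map_comap, hemb.aestronglyMeasurable_map_iff]
  exact hYTG.aestronglyMeasurable

section SecondMoment

variable {Ω : Type*} [MeasurableSpace Ω] {μ : Measure Ω}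

lemma eLpNorm_two_eq_ofReal_of_integral_sq_eq {X : Ω → ℝ} {σ : ℝ} (hσ : 0 < σ)
    (hX : ∫ ω, X ω ^ 2 ∂μ = σ ^ 2) : eLpNorm X 2 μ = ENNReal.ofReal σ := by
  have hint : Integrable (fun ω => X ω ^ 2) μ :=
    .of_integral_ne_zero (hX ▸ (pow_pos hσ 2).ne')
  apply (ENNReal.pow_right_strictMono two_ne_zero).injective
  calc eLpNorm X 2 μ ^ 2
      = ∫⁻ ω, ENNReal.ofReal (X ω ^ 2) ∂μ := by
        simp only [sq_eLpNorm_two_eq_lintegral, ← Real.enorm_of_nonneg (sq_nonneg _), enorm_pow]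
    _ = ENNReal.ofReal (σ ^ 2) := by
        rw [← ofReal_integral_eq_lintegral_ofReal hint (ae_of_all _ fun _ => sq_nonneg _), hX]
    _ = ENNReal.ofReal σ ^ 2 := ENNReal.ofReal_pow hσ.le 2

lemma tendsto_integral_sq_of_tendsto_eLpNorm_two {ι : Type*} {l : Filter ι} {X : ι → Ω → ℝ}
    (hX : Tendsto (fun i => eLpNorm (X i) 2 μ) l (𝓝 0)) :
    Tendsto (fun i => ∫ ω, X i ω ^ 2 ∂μ) l (𝓝 0) := by
  have hsq : Tendsto (fun i => eLpNorm (X i) 2 μ ^ 2) l (𝓝 0) := by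
    simpa using ENNReal.Tendsto.pow (n := 2) hX
  refine tendsto_zero_iff_enorm_tendsto_zero.2 (tendsto_of_tendsto_of_tendsto_of_le_of_le
    tendsto_const_nhds hsq (fun _ => zero_le) fun i => ?_)
  calc ‖∫ ω, X i ω ^ 2 ∂μ‖ₑ
      ≤ ∫⁻ ω, ‖X i ω ^ 2‖ₑ ∂μ := enorm_integral_le_lintegral_enorm _
    _ = eLpNorm (X i) 2 μ ^ 2 := by simp only [sq_eLpNorm_two_eq_lintegral, enorm_pow]

lemma lintegral_eLpNorm_two_exp_mul_ne_top {B : ℝ → Ω → ℝ} {H α : ℝ} (hH : -1 < H) (hα : 0 < α)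
    (hB : ∀ s, 0 < s → ∫ ω, B s ω ^ 2 ∂μ = s ^ (2 * H)) :
    ∫⁻ s in Ioi (0 : ℝ), eLpNorm (fun ω => Real.exp (-α * s) * B s ω) 2 μ ≠ ∞ := by
  have hnorm : ∀ s ∈ Ioi (0 : ℝ), eLpNorm (fun ω => Real.exp (-α * s) * B s ω) 2 μ =
      ENNReal.ofReal (s ^ H * Real.exp (-α * s)) := by
    intro s hs
    have hsH : s ^ (2 * H) = (s ^ H) ^ 2 := by
      rw [mul_comm, Real.rpow_mul (le_of_lt hs), Real.rpow_two]
    refine eLpNorm_two_eq_ofReal_of_integral_sq_eq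
      (mul_pos (Real.rpow_pos_of_pos hs H) (Real.exp_pos _)) ?_
    simp only [mul_pow, integral_const_mul, hB s hs, hsH]
    ring
  have hgamma : IntegrableOn (fun s : ℝ => s ^ H * Real.exp (-α * s)) (Ioi 0) := by
    simpa using integrableOn_rpow_mul_exp_neg_mul_rpow hH one_pos hα
  rw [setLIntegral_congr_fun measurableSet_Ioi hnorm]
  exact hgamma.lintegral_lt_top.ne

end SecondMoment

theorem stmt_10_general {Ω E : Type*} [MeasurableSpace Ω] {P : Measure Ω} [SFinite P]
    [NormedAddCommGroup E] [NormedSpace ℝ E] [CompleteSpace E] {Y : ℝ → Ω → E} {a : ℝ}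
    (hmeas : ∀ s ∈ Ioi a, StronglyMeasurable (Y s))
    (hcont : ∀ᵐ ω ∂P, ContinuousOn (Y · ω) (Ioi a))
    (hfin : ∫⁻ s in Ioi a, eLpNorm (Y s) 2 P ≠ ∞) :
    (∀ᵐ ω ∂P, IntegrableOn (Y · ω) (Ici a)) ∧
    (∀ᵐ ω ∂P, Tendsto (fun t => ∫ s in a..t, Y s ω) atTop (𝓝 (∫ s in Ioi a, Y s ω))) ∧
    Tendsto (fun t => eLpNorm (fun ω => (∫ s in a..t, Y s ω) - ∫ s in Ioi a, Y s ω) 2 P)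
      atTop (𝓝 0) := by
  have hY : AEStronglyMeasurable (uncurry Y) ((volume.restrict (Ioi a)).prod P) :=
    aestronglyMeasurable_uncurry_of_ae_continuousOn measurableSet_Ioi hmeas hcont
  have hint := ae_integrable_of_lintegral_eLpNorm_two_ne_top hY hfin
  exact ⟨hint.mono fun _ hω => (integrableOn_Ici_iff_integrableOn_Ioi ..).mpr hω,
    hint.mono fun _ hω => intervalIntegral_tendsto_integral_Ioi a hω tendsto_id,
    tendsto_eLpNorm_two_intervalIntegral_sub_integral_Ioi hY hfin⟩

/-- Almost surely `s ↦ e^{-α s} B_s` is integrable on `[0, ∞)`, and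
`Z_t → Z_∞ := ∫_0^∞ e^{-α s} B_s ds` as `t → ∞`, almost surely and in `L²`. -/
theorem stmt_10 {Ω : Type*} [MeasurableSpace Ω] (P : Measure Ω) [IsProbabilityMeasure P]
    (H : ℝ) (hH1 : 1 / 2 ≤ H) (hH2 : H < 1)
    (B : ℝ → Ω → ℝ)
    (hBmeas : ∀ t : ℝ, Measurable (B t))
    (hBgauss : ∀ (m : ℕ) (t : Fin m → ℝ) (c : Fin m → ℝ), (∀ i, 0 ≤ t i) →
      ∃ v : NNReal, Measure.map (fun ω => ∑ i, c i * B (t i) ω) P = gaussianReal 0 v)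
    (hB0 : ∀ ω, B 0 ω = 0)
    (hBcov : ∀ s t : ℝ, 0 ≤ s → 0 ≤ t →
      ∫ ω, B s ω * B t ω ∂P = 1 / 2 * (s ^ (2 * H) + t ^ (2 * H) - |t - s| ^ (2 * H)))
    (hBcont : ∀ᵐ ω ∂P, ContinuousOn (fun t => B t ω) (Set.Ici (0 : ℝ)))
    (α : ℝ) (hα : 0 < α)
    (Z : ℝ → Ω → ℝ)
    (hZ : ∀ (t : ℝ) (ω : Ω), Z t ω = ∫ s in (0:ℝ)..t, Real.exp (-α * s) * B s ω)
    (Zinf : Ω → ℝ)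
    (hZinf : ∀ ω : Ω, Zinf ω = ∫ s in Set.Ioi (0:ℝ), Real.exp (-α * s) * B s ω) :
    (∀ᵐ ω ∂P, IntegrableOn (fun s : ℝ => Real.exp (-α * s) * B s ω) (Set.Ici (0:ℝ))) ∧
    (∀ᵐ ω ∂P, Tendsto (fun t : ℝ => Z t ω) atTop (nhds (Zinf ω))) ∧
    Tendsto (fun t : ℝ => ∫ ω, (Z t ω - Zinf ω) ^ 2 ∂P) atTop (nhds 0) := by
  have hvar : ∀ s, 0 < s → ∫ ω, B s ω ^ 2 ∂P = s ^ (2 * H) := fun s hs => by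
    simp only [sq, hBcov s s hs.le hs.le, sub_self, abs_zero,
      Real.zero_rpow (by linarith : 2 * H ≠ 0)]
    ring
  obtain ⟨hint, hlim, hL2⟩ := stmt_10_general
    (fun s _ => ((hBmeas s).const_mul (Real.exp (-α * s))).stronglyMeasurable)
    (hBcont.mono fun ω hω => (by fun_prop : Continuous fun s => Real.exp (-α * s)).continuousOn.mul
      (hω.mono Ioi_subset_Ici_self))
    (lintegral_eLpNorm_two_exp_mul_ne_top (by linarith) hα hvar)
  simp only [hZ, hZinf]
  exact ⟨hint, hlim, tendsto_integral_sq_of_tendsto_eLpNorm_two hL2⟩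
end

section
/- Almost surely, as the integer n → ∞, e^{−α n} ∫_0^n φ(s) X_s ds converges to λ_φ · (A_∞ + α Z_∞), where λ_φ := (∫_0^1 φ(s) e^{α s} ds)/(e^α − 1). -/
open MeasureTheory ProbabilityTheory Filter

/-!
Put `f s = e^{-α s} (L s + α B_s)` and `F t = ∫_0^t f`, so that `X_t = e^{α t} F t + B_t`.
Integrating by parts against `Φ t = ∫_0^t φ s e^{α s} ds`,
`∫_0^t φ X = Φ t * F t - ∫_0^t Φ f + ∫_0^t φ B`.
Almost surely `∫_0^∞ e^{-α s} |B_s| ds < ∞`, by Fubini and `E B_s² = s^{2H}`; as `φ` is bounded and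
`Φ s = O(e^{α s})`, the last two integrals have the form `∫_0^t e^{α s} g s ds` with `g` integrable,
hence are `o(e^{α t})`. Finally `F t → A_∞ + α Z_∞`, and periodicity turns `e^{-α n} Φ n` into a
geometric sum with limit `λ_φ`.
-/

open Set (Ioi Ici)
open scoped Topology

section Kronecker

variable {α : ℝ} {f g φ : ℝ → ℝ}

lemma tendsto_exp_neg_mul_integral_exp_mul (hα : 0 < α) (hg : IntegrableOn g (Ioi 0)) :
    Tendsto (fun t : ℝ => Real.exp (-α * t) * ∫ s in 0..t, Real.exp (α * s) * g s)
      atTop (𝓝 0) := by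
  let K (t : ℝ) : ℝ → ℝ := (Set.Iic t).indicator fun s => Real.exp (α * (s - t)) * g s
  have kernel_of_le {t s : ℝ} (hst : s ≤ t) : K t s = Real.exp (α * (s - t)) * g s :=
    Set.indicator_of_mem (Set.mem_Iic.2 hst) _
  have kernel_bound (t s : ℝ) : ‖K t s‖ ≤ ‖g s‖ := by
    by_cases hst : s ≤ t
    · rw [kernel_of_le hst, norm_mul, Real.norm_eq_abs, Real.abs_exp]
      exact mul_le_of_le_one_left (norm_nonneg _) <|
        Real.exp_le_one_iff.2 (mul_nonpos_of_nonneg_of_nonpos hα.le (sub_nonpos.2 hst))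
    · rw [show K t s = 0 from Set.indicator_of_notMem (Set.mem_Iic.not.2 hst) _, norm_zero]
      exact norm_nonneg _
  have kernel_tendsto (s : ℝ) : Tendsto (K · s) atTop (𝓝 0) := by
    have exp_tendsto : Tendsto (fun t => Real.exp (α * (s - t))) atTop (𝓝 0) :=
      Real.tendsto_exp_atBot.comp <|
        (tendsto_atBot_add_const_left _ s tendsto_neg_atTop_atBot).const_mul_atBot hα
    refine (zero_mul (g s) ▸ exp_tendsto.mul_const (g s)).congr' ?_
    filter_upwards [eventually_ge_atTop s] with t hst using (kernel_of_le hst).symm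
  have integral_tendsto : Tendsto (fun t => ∫ s in Ioi 0, K t s) atTop
      (𝓝 (∫ _ in Ioi (0 : ℝ), (0 : ℝ))) := by
    refine tendsto_integral_filter_of_dominated_convergence (fun s => ‖g s‖)
      (.of_forall fun t => ?_) (.of_forall fun t => ae_of_all _ (kernel_bound t)) hg.norm
      (ae_of_all _ kernel_tendsto)
    exact (AEStronglyMeasurable.mul (by fun_prop) hg.aestronglyMeasurable).indicator
      measurableSet_Iic
  rw [integral_zero] at integral_tendsto
  refine integral_tendsto.congr' ?_
  filter_upwards [eventually_ge_atTop 0] with t ht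
  rw [setIntegral_indicator measurableSet_Iic, Set.Ioi_inter_Iic,
    ← intervalIntegral.integral_of_le ht, ← intervalIntegral.integral_const_mul]
  congr 1 with s
  rw [← mul_assoc, ← Real.exp_add]
  ring_nf

lemma intervalIntegrable_of_integrableOn_Ioi {a b : ℝ} (hab : a ≤ b)
    (hf : IntegrableOn f (Ioi a)) : IntervalIntegrable f volume a b :=
  (intervalIntegrable_iff_integrableOn_Ioc_of_le hab).2 (hf.mono_set Set.Ioc_subset_Ioi_self)

lemma intervalIntegrable_of_integrableOn_exp_mul {a b c : ℝ} (hab : a ≤ b)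
    (hf : IntegrableOn (fun s => Real.exp (c * s) * f s) (Ioi a)) :
    IntervalIntegrable f volume a b := by
  have exp_cancel := (intervalIntegrable_of_integrableOn_Ioi hab hf).continuousOn_mul
    (g := fun s => Real.exp (-(c * s))) (by fun_prop)
  simpa only [← mul_assoc, ← Real.exp_add, neg_add_cancel, Real.exp_zero, one_mul] using exp_cancel

lemma intervalIntegral_mul_primitive {a b : ℝ} (hf : IntervalIntegrable f volume a b)
    (hg : IntervalIntegrable g volume a b) :
    ∫ s in a..b, f s * ∫ u in a..s, g u =
      (∫ s in a..b, f s) * (∫ s in a..b, g s) - ∫ s in a..b, (∫ u in a..s, f u) * g s := by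
  have hF := hf.absolutelyContinuousOnInterval_intervalIntegral Set.left_mem_uIcc
  have hG := hg.absolutelyContinuousOnInterval_intervalIntegral Set.left_mem_uIcc
  have hF' : ∫ s in a..b, deriv (fun x => ∫ u in a..x, f u) s * ∫ u in a..s, g u =
      ∫ s in a..b, f s * ∫ u in a..s, g u := by
    refine intervalIntegral.integral_congr_ae ?_
    filter_upwards [hf.ae_hasDerivAt_integral] with s hs hsab
    rw [(hs (Set.uIoc_subset_uIcc hsab) a Set.left_mem_uIcc).deriv]
  have hG' : ∫ s in a..b, (∫ u in a..s, f u) * deriv (fun x => ∫ u in a..x, g u) s =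
      ∫ s in a..b, (∫ u in a..s, f u) * g s := by
    refine intervalIntegral.integral_congr_ae ?_
    filter_upwards [hg.ae_hasDerivAt_integral] with s hs hsab
    rw [(hs (Set.uIoc_subset_uIcc hsab) a Set.left_mem_uIcc).deriv]
  have by_parts := hF.integral_mul_deriv_eq_deriv_mul hG
  rw [hF', hG', intervalIntegral.integral_same, zero_mul, sub_zero] at by_parts
  linarith

lemma intervalIntegrable_mul_of_bdd {a b : ℝ} (hφ : AEStronglyMeasurable φ)
    (hφbdd : ∃ M : ℝ, ∀ s, |φ s| ≤ M) (hg : IntervalIntegrable g volume a b) :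
    IntervalIntegrable (fun s => φ s * g s) volume a b := by
  obtain ⟨M, hM⟩ := hφbdd
  rw [intervalIntegrable_iff] at hg ⊢
  exact hg.bdd_mul hφ.restrict (ae_of_all _ hM)

lemma intervalIntegrable_of_bdd {a b : ℝ} (hφ : AEStronglyMeasurable φ)
    (hφbdd : ∃ M : ℝ, ∀ s, |φ s| ≤ M) : IntervalIntegrable φ volume a b := by
  simpa only [mul_one] using
    intervalIntegrable_mul_of_bdd hφ hφbdd (intervalIntegrable_const (c := (1 : ℝ)))

lemma intervalIntegrable_mul_exp_of_bdd {a b c : ℝ} (hφ : AEStronglyMeasurable φ)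
    (hφbdd : ∃ M : ℝ, ∀ s, |φ s| ≤ M) :
    IntervalIntegrable (fun s => φ s * Real.exp (c * s)) volume a b :=
  (intervalIntegrable_of_bdd hφ hφbdd).mul_continuousOn (by fun_prop)

lemma abs_integral_mul_exp_le {M : ℝ} (hα : 0 < α) (hM : ∀ s, |φ s| ≤ M) {t : ℝ} (ht : 0 ≤ t) :
    |∫ s in 0..t, φ s * Real.exp (α * s)| ≤ M / α * Real.exp (α * t) := by
  have hM0 : 0 ≤ M := (abs_nonneg _).trans (hM 0)
  calc |∫ s in 0..t, φ s * Real.exp (α * s)|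
      ≤ ∫ s in 0..t, M * Real.exp (α * s) := by
        have dominating : Continuous fun s => M * Real.exp (α * s) := by fun_prop
        rw [← Real.norm_eq_abs]
        refine intervalIntegral.norm_integral_le_of_norm_le ht (ae_of_all _ fun s _ => ?_)
          (dominating.intervalIntegrable 0 t)
        rw [norm_mul, Real.norm_eq_abs, Real.norm_eq_abs, Real.abs_exp]
        gcongr
        exact hM s
    _ = M / α * (Real.exp (α * t) - 1) := by
        rw [intervalIntegral.integral_const_mul,
          intervalIntegral.integral_comp_mul_left (fun s => Real.exp s) hα.ne', integral_exp]
        simp only [smul_eq_mul, mul_zero, Real.exp_zero]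
        ring
    _ ≤ M / α * Real.exp (α * t) := by
        gcongr
        linarith

lemma tendsto_exp_neg_mul_integral_mul (hα : 0 < α) (hφ : AEStronglyMeasurable φ)
    (hφbdd : ∃ M : ℝ, ∀ s, |φ s| ≤ M)
    (hg : IntegrableOn (fun s => Real.exp (-α * s) * g s) (Ioi 0)) :
    Tendsto (fun t : ℝ => Real.exp (-α * t) * ∫ s in 0..t, φ s * g s) atTop (𝓝 0) := by
  obtain ⟨M, hM⟩ := hφbdd
  have hφg : IntegrableOn (fun s => φ s * (Real.exp (-α * s) * g s)) (Ioi 0) :=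
    hg.bdd_mul hφ.restrict (ae_of_all _ hM)
  refine (tendsto_exp_neg_mul_integral_exp_mul hα hφg).congr fun t => ?_
  congr 2 with s
  rw [neg_mul, Real.exp_neg]
  field_simp

lemma tendsto_exp_neg_mul_integral_primitive_mul (hα : 0 < α)
    (hφ : AEStronglyMeasurable φ) (hφbdd : ∃ M : ℝ, ∀ s, |φ s| ≤ M)
    (hf : IntegrableOn f (Ioi 0)) :
    Tendsto (fun t : ℝ => Real.exp (-α * t) *
      ∫ s in 0..t, (∫ u in 0..s, φ u * Real.exp (α * u)) * f s) atTop (𝓝 0) := by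
  obtain ⟨M, hM⟩ := hφbdd
  let ψ (s : ℝ) : ℝ := Real.exp (-α * s) * ∫ u in 0..s, φ u * Real.exp (α * u)
  have hψ : Continuous ψ := by
    have primitive := intervalIntegral.continuous_primitive
      (fun a b => intervalIntegrable_mul_exp_of_bdd (c := α) (a := a) (b := b) hφ ⟨M, hM⟩) 0
    fun_prop
  have hψbdd : ∀ s ∈ Ioi (0 : ℝ), ‖ψ s‖ ≤ M / α := by
    intro s hs
    calc ‖ψ s‖ = Real.exp (-α * s) * |∫ u in 0..s, φ u * Real.exp (α * u)| := by
          rw [norm_mul, Real.norm_eq_abs, Real.norm_eq_abs, Real.abs_exp]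
      _ ≤ Real.exp (-α * s) * (M / α * Real.exp (α * s)) := by
          gcongr
          exact abs_integral_mul_exp_le hα hM hs.le
      _ = M / α := by
          rw [mul_left_comm, ← Real.exp_add, neg_mul, neg_add_cancel, Real.exp_zero, mul_one]
  have hψf : IntegrableOn (fun s => ψ s * f s) (Ioi 0) :=
    hf.bdd_mul hψ.aestronglyMeasurable (ae_restrict_of_forall_mem measurableSet_Ioi hψbdd)
  refine (tendsto_exp_neg_mul_integral_exp_mul hα hψf).congr fun t => ?_
  congr 2 with s
  simp only [ψ, neg_mul, Real.exp_neg]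
  field_simp

lemma tendsto_exp_neg_mul_integral_mul_exp_mul_primitive {ι : Type*} {l : Filter ι} {t : ι → ℝ}
    {r : ℝ} (hα : 0 < α) (hφ : AEStronglyMeasurable φ) (hφbdd : ∃ M : ℝ, ∀ s, |φ s| ≤ M)
    (ht : Tendsto t l atTop)
    (hr : Tendsto (fun i => Real.exp (-α * t i) * ∫ s in 0..t i, φ s * Real.exp (α * s))
      l (𝓝 r))
    (hf : IntegrableOn f (Ioi 0)) :
    Tendsto (fun i => Real.exp (-α * t i) *
        ∫ s in 0..t i, φ s * (Real.exp (α * s) * ∫ u in 0..s, f u))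
      l (𝓝 (r * ∫ s in Ioi 0, f s)) := by
  have boundary := hr.mul ((intervalIntegral_tendsto_integral_Ioi 0 hf tendsto_id).comp ht)
  have remainder := (tendsto_exp_neg_mul_integral_primitive_mul hα hφ hφbdd hf).comp ht
  rw [← sub_zero (r * _)]
  refine (boundary.sub remainder).congr' ?_
  filter_upwards [ht.eventually_ge_atTop 0] with i hi
  simp only [← mul_assoc, Function.comp_apply, id]
  rw [intervalIntegral_mul_primitive (intervalIntegrable_mul_exp_of_bdd hφ hφbdd)
    (intervalIntegrable_of_integrableOn_Ioi hi hf)]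
  ring

end Kronecker

section Periodic

variable {c T : ℝ} {f : ℝ → ℝ}

lemma intervalIntegral_mul_exp_of_periodic (hT : T ≠ 0) (hper : Function.Periodic f T)
    (hf : IntervalIntegrable f volume 0 T) (n : ℕ) :
    ∫ s in 0..(n * T), f s * Real.exp (c * s) =
      (∫ s in 0..T, f s * Real.exp (c * s)) * ∑ k ∈ Finset.range n, Real.exp (c * T) ^ k := by
  have one_period : ∀ k : ℕ,
      ∫ s in (k * T)..((k + 1 : ℕ) * T), f s * Real.exp (c * s) =
        (∫ s in 0..T, f s * Real.exp (c * s)) * Real.exp (c * T) ^ k := by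
    intro k
    have shift := intervalIntegral.integral_comp_add_right (a := 0) (b := T)
      (fun s => f s * Real.exp (c * s)) (k * T)
    rw [zero_add, ← one_add_mul, add_comm 1 (k : ℝ), ← Nat.cast_succ] at shift
    rw [← shift, ← intervalIntegral.integral_mul_const]
    congr 1 with s
    rw [hper.nat_mul k s, ← Real.exp_nat_mul, mul_assoc, ← Real.exp_add]
    ring_nf
  have integrable_period : ∀ k < n, IntervalIntegrable (fun s => f s * Real.exp (c * s)) volume
      (k * T) ((k + 1 : ℕ) * T) := fun k _ =>
    (hper.intervalIntegrable₀ hT hf _ _).mul_continuousOn (by fun_prop)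
  rw [Finset.mul_sum, ← Finset.sum_congr rfl fun k _ => one_period k,
    intervalIntegral.sum_integral_adjacent_intervals integrable_period, Nat.cast_zero, zero_mul]

lemma tendsto_intervalIntegral_mul_exp_of_periodic (hT : 0 < T) (hc : c < 0)
    (hper : Function.Periodic f T) (hf : IntervalIntegrable f volume 0 T) :
    Tendsto (fun n : ℕ => ∫ s in 0..(n * T), f s * Real.exp (c * s)) atTop
      (𝓝 ((∫ s in 0..T, f s * Real.exp (c * s)) / (1 - Real.exp (c * T)))) := by
  have exp_lt_one : Real.exp (c * T) < 1 := Real.exp_lt_one_iff.2 (mul_neg_of_neg_of_pos hc hT)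
  simp only [intervalIntegral_mul_exp_of_periodic hT.ne' hper hf, div_eq_mul_inv]
  exact (hasSum_geometric_of_lt_one (Real.exp_pos _).le exp_lt_one).tendsto_sum_nat.const_mul _

lemma tendsto_exp_neg_mul_intervalIntegral_mul_exp_of_periodic (hT : 0 < T) (hc : 0 < c)
    (hper : Function.Periodic f T) (hf : IntervalIntegrable f volume 0 T) :
    Tendsto (fun n : ℕ => Real.exp (-c * (n * T)) *
        ∫ s in 0..(n * T), f s * Real.exp (c * s)) atTop
      (𝓝 ((∫ s in 0..T, f s * Real.exp (c * s)) / (Real.exp (c * T) - 1))) := by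
  have one_lt_exp : 1 < Real.exp (c * T) := Real.one_lt_exp_iff.2 (mul_pos hc hT)
  have inv_pow_tendsto : Tendsto (fun n : ℕ => (Real.exp (c * T))⁻¹ ^ n) atTop (𝓝 0) :=
    tendsto_pow_atTop_nhds_zero_of_lt_one (by positivity) (inv_lt_one_of_one_lt₀ one_lt_exp)
  have limit := (inv_pow_tendsto.const_sub 1).const_mul
    ((∫ s in 0..T, f s * Real.exp (c * s)) / (Real.exp (c * T) - 1))
  rw [sub_zero, mul_one] at limit
  refine limit.congr fun n => ?_
  have exp_eq : Real.exp (-c * (n * T)) = (Real.exp (c * T) ^ n)⁻¹ := by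
    rw [← Real.exp_nat_mul, ← Real.exp_neg]
    ring_nf
  have sub_ne_zero : Real.exp (c * T) - 1 ≠ 0 := sub_ne_zero.2 one_lt_exp.ne'
  rw [intervalIntegral_mul_exp_of_periodic hT.ne' hper hf, geom_sum_eq one_lt_exp.ne', exp_eq,
    inv_pow]
  field_simp

lemma integrableOn_mul_exp_of_periodic (hT : 0 < T) (hc : c < 0)
    (hper : Function.Periodic f T) (hf : IntervalIntegrable f volume 0 T) :
    IntegrableOn (fun s => f s * Real.exp (c * s)) (Ioi 0) := by
  have norm_tendsto := tendsto_intervalIntegral_mul_exp_of_periodic hT hc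
    (f := fun s => ‖f s‖) (fun s => congrArg norm (hper s)) hf.norm
  refine integrableOn_Ioi_of_intervalIntegral_norm_tendsto _ 0 (fun n : ℕ => ?_)
    (tendsto_natCast_atTop_atTop.atTop_mul_const hT)
    (norm_tendsto.congr fun n => ?_)
  · rw [← intervalIntegrable_iff_integrableOn_Ioc_of_le (by positivity)]
    exact (hper.intervalIntegrable₀ hT.ne' hf _ _).mul_continuousOn (by fun_prop)
  · simp only [norm_mul, Real.norm_eq_abs, Real.abs_exp]

lemma integral_Ioi_mul_exp_of_periodic (hT : 0 < T) (hc : c < 0)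
    (hper : Function.Periodic f T) (hf : IntervalIntegrable f volume 0 T) :
    ∫ s in Ioi 0, f s * Real.exp (c * s) =
      (∫ s in 0..T, f s * Real.exp (c * s)) / (1 - Real.exp (c * T)) :=
  tendsto_nhds_unique
    (intervalIntegral_tendsto_integral_Ioi 0 (integrableOn_mul_exp_of_periodic hT hc hper hf)
      (tendsto_natCast_atTop_atTop.atTop_mul_const hT))
    (tendsto_intervalIntegral_mul_exp_of_periodic hT hc hper hf)

end Periodic

section Langevin

variable {α T : ℝ} {L b φ : ℝ → ℝ}

/-- The explicit solution, started at `0`, of the Langevin equation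
`dX_t = (L t + α X_t) dt + db_t` driven by the path `b`, used for each fixed sample path of the
noise. -/
noncomputable def langevinSolution (α : ℝ) (L b : ℝ → ℝ) (t : ℝ) : ℝ :=
  Real.exp (α * t) * (∫ s in 0..t, Real.exp (-α * s) * L s) +
    α * Real.exp (α * t) * (∫ s in 0..t, Real.exp (-α * s) * b s) + b t

lemma langevinSolution_eq_exp_mul_primitive_add {t : ℝ} (ht : 0 ≤ t)
    (hL : IntegrableOn (fun s => Real.exp (-α * s) * L s) (Ioi 0))
    (hb : IntegrableOn (fun s => Real.exp (-α * s) * b s) (Ioi 0)) :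
    langevinSolution α L b t =
      Real.exp (α * t) * (∫ s in 0..t,
        (Real.exp (-α * s) * L s + α * (Real.exp (-α * s) * b s))) + b t := by
  rw [intervalIntegral.integral_add (intervalIntegrable_of_integrableOn_Ioi ht hL)
      (intervalIntegrable_of_integrableOn_Ioi ht (hb.const_mul α)),
    intervalIntegral.integral_const_mul, langevinSolution]
  ring

lemma tendsto_exp_neg_mul_integral_mul_langevinSolution {ι : Type*} {l : Filter ι} {t : ι → ℝ}
    {r : ℝ} (hα : 0 < α) (hφ : AEStronglyMeasurable φ) (hφbdd : ∃ M : ℝ, ∀ s, |φ s| ≤ M)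
    (ht : Tendsto t l atTop)
    (hr : Tendsto (fun i => Real.exp (-α * t i) * ∫ s in 0..t i, φ s * Real.exp (α * s))
      l (𝓝 r))
    (hL : IntegrableOn (fun s => Real.exp (-α * s) * L s) (Ioi 0))
    (hb : IntegrableOn (fun s => Real.exp (-α * s) * b s) (Ioi 0)) :
    Tendsto (fun i => Real.exp (-α * t i) * ∫ s in 0..t i, φ s * langevinSolution α L b s)
      l (𝓝 (r * ((∫ s in Ioi 0, Real.exp (-α * s) * L s) +
        α * ∫ s in Ioi 0, Real.exp (-α * s) * b s))) := by
  let f (s : ℝ) : ℝ := Real.exp (-α * s) * L s + α * (Real.exp (-α * s) * b s)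
  have hf : IntegrableOn f (Ioi 0) := hL.add (hb.const_mul α)
  have growth :=
    tendsto_exp_neg_mul_integral_mul_exp_mul_primitive hα hφ hφbdd ht hr hf
  have noise := (tendsto_exp_neg_mul_integral_mul hα hφ hφbdd hb).comp ht
  have limit := growth.add noise
  rw [add_zero, integral_add hL (hb.const_mul α), integral_const_mul] at limit
  refine limit.congr' ?_
  filter_upwards [ht.eventually_ge_atTop 0] with i hi
  have hφf : IntervalIntegrable (fun s => φ s * (Real.exp (α * s) * ∫ u in 0..s, f u))
      volume 0 (t i) :=
    intervalIntegrable_mul_of_bdd hφ hφbdd <| ContinuousOn.intervalIntegrable <|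
      ContinuousOn.mul (by fun_prop) <| intervalIntegral.continuousOn_primitive_interval'
        (intervalIntegrable_of_integrableOn_Ioi hi hf) Set.left_mem_uIcc
  have hφb : IntervalIntegrable (fun s => φ s * b s) volume 0 (t i) :=
    intervalIntegrable_mul_of_bdd hφ hφbdd (intervalIntegrable_of_integrableOn_exp_mul hi hb)
  rw [Function.comp_apply, ← mul_add, ← intervalIntegral.integral_add hφf hφb]
  congr 1
  refine intervalIntegral.integral_congr fun s hs => ?_
  have hs0 : 0 ≤ s := (Set.uIcc_of_le hi ▸ hs).1
  simp only [langevinSolution_eq_exp_mul_primitive_add hs0 hL hb, mul_add, f]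

theorem tendsto_exp_neg_mul_integral_periodic_mul_langevinSolution (hα : 0 < α) (hT : 0 < T)
    (hφ : AEStronglyMeasurable φ) (hφbdd : ∃ M : ℝ, ∀ s, |φ s| ≤ M) (hφper : Function.Periodic φ T)
    (hL : IntervalIntegrable L volume 0 T) (hLper : Function.Periodic L T)
    (hb : IntegrableOn (fun s => Real.exp (-α * s) * b s) (Ioi 0)) :
    Tendsto (fun n : ℕ => Real.exp (-α * (n * T)) *
        ∫ s in 0..(n * T), φ s * langevinSolution α L b s) atTop
      (𝓝 ((∫ s in 0..T, φ s * Real.exp (α * s)) / (Real.exp (α * T) - 1) *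
        ((∫ s in 0..T, Real.exp (-α * s) * L s) / (1 - Real.exp (-α * T)) +
          α * ∫ s in Ioi 0, Real.exp (-α * s) * b s))) := by
  have hLint : IntegrableOn (fun s => Real.exp (-α * s) * L s) (Ioi 0) := by
    simpa only [mul_comm] using integrableOn_mul_exp_of_periodic hT (neg_neg_of_pos hα) hLper hL
  have hLintegral : ∫ s in Ioi 0, Real.exp (-α * s) * L s =
      (∫ s in 0..T, Real.exp (-α * s) * L s) / (1 - Real.exp (-α * T)) := by
    simpa only [mul_comm (L _)] using
      integral_Ioi_mul_exp_of_periodic hT (neg_neg_of_pos hα) hLper hL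
  rw [← hLintegral]
  exact tendsto_exp_neg_mul_integral_mul_langevinSolution hα hφ hφbdd
    (tendsto_natCast_atTop_atTop.atTop_mul_const hT)
    (tendsto_exp_neg_mul_intervalIntegral_mul_exp_of_periodic hT hα hφper
      (intervalIntegrable_of_bdd hφ hφbdd)) hLint hb

end Langevin

section SamplePaths

lemma aestronglyMeasurable_uncurry_of_ae_continuous {ι Ω E : Type*} [TopologicalSpace ι]
    [TopologicalSpace.MetrizableSpace ι] [SecondCountableTopology ι] [MeasurableSpace ι]
    [OpensMeasurableSpace ι] [TopologicalSpace E] [TopologicalSpace.PseudoMetrizableSpace E]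
    [Zero E] [MeasurableSpace Ω] {Y : ι → Ω → E} {μ : Measure ι} {P : Measure Ω} [SFinite P]
    (hY : ∀ i, StronglyMeasurable (Y i)) (hcont : ∀ᵐ ω ∂P, Continuous (Y · ω)) :
    AEStronglyMeasurable (Function.uncurry Y) (μ.prod P) := by
  obtain ⟨S, hSP, hSmeas, hScont⟩ := hcont.exists_measurable_mem
  refine ⟨Function.uncurry fun i => S.indicator (Y i),
    stronglyMeasurable_uncurry_of_continuous_of_stronglyMeasurable (fun ω => ?_)
      fun i => (hY i).indicator hSmeas, ?_⟩
  · by_cases hω : ω ∈ S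
    · simpa only [Set.indicator_of_mem hω] using hScont ω hω
    · simpa only [Set.indicator_of_notMem hω] using continuous_const
  · filter_upwards [Measure.quasiMeasurePreserving_snd.ae hSP] with p hp
    exact (Set.indicator_of_mem hp _).symm

lemma ae_integrable_of_integral_norm_le {ι Ω E : Type*} [TopologicalSpace ι]
    [TopologicalSpace.MetrizableSpace ι] [SecondCountableTopology ι] [MeasurableSpace ι]
    [OpensMeasurableSpace ι] [NormedAddCommGroup E] [MeasurableSpace Ω] {Y : ι → Ω → E}
    {μ : Measure ι} [SFinite μ] {P : Measure Ω} [SFinite P] {g : ι → ℝ}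
    (hY : ∀ i, StronglyMeasurable (Y i)) (hcont : ∀ᵐ ω ∂P, Continuous (Y · ω))
    (hint : ∀ᵐ i ∂μ, Integrable (Y i) P) (hg : Integrable g μ)
    (hle : ∀ᵐ i ∂μ, ∫ ω, ‖Y i ω‖ ∂P ≤ g i) :
    ∀ᵐ ω ∂P, Integrable (Y · ω) μ := by
  have joint := aestronglyMeasurable_uncurry_of_ae_continuous (μ := μ) hY hcont
  suffices Integrable (Function.uncurry Y) (μ.prod P) from this.prod_left_ae
  refine (integrable_prod_iff joint).2 ⟨hint, hg.mono' joint.norm.integral_prod_right' ?_⟩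
  filter_upwards [hle] with i hi
  rwa [Real.norm_of_nonneg (integral_nonneg fun ω => norm_nonneg _)]

theorem ae_integrableOn_exp_neg_mul_of_integral_abs_le {Ω : Type*} [MeasurableSpace Ω]
    {P : Measure Ω} [SFinite P] {B : ℝ → Ω → ℝ} {α : ℝ} {v : ℝ → ℝ}
    (hBmeas : ∀ t, 0 ≤ t → Measurable (B t))
    (hBcont : ∀ᵐ ω ∂P, ContinuousOn (B · ω) (Ici 0))
    (hBint : ∀ t, 0 ≤ t → Integrable (B t) P)
    (hBv : ∀ t, 0 ≤ t → ∫ ω, |B t ω| ∂P ≤ v t)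
    (hv : IntegrableOn (fun t => Real.exp (-α * t) * v t) (Ioi 0)) :
    ∀ᵐ ω ∂P, IntegrableOn (fun t => Real.exp (-α * t) * B t ω) (Ioi 0) := by
  -- `B` is only controlled on `[0, ∞)`, so it is extended to a process continuous on all of `ℝ`.
  let Y (t : ℝ) (ω : Ω) : ℝ := Real.exp (-α * t) * B (max t 0) ω
  have hYmeas (t : ℝ) : StronglyMeasurable (Y t) :=
    ((hBmeas _ (le_max_right t 0)).const_mul _).stronglyMeasurable
  have hYcont : ∀ᵐ ω ∂P, Continuous (Y · ω) := by
    filter_upwards [hBcont] with ω hω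
    have extension : Continuous fun t => B (max t 0) ω :=
      hω.comp_continuous (f := (max · 0)) (by fun_prop) fun t => le_max_right t 0
    exact Continuous.mul (by fun_prop) extension
  have hYint : ∀ᵐ t ∂volume.restrict (Ioi 0), Integrable (Y t) P :=
    ae_of_all _ fun t => (hBint _ (le_max_right t 0)).const_mul _
  have hYnorm : ∀ᵐ t ∂volume.restrict (Ioi 0), ∫ ω, ‖Y t ω‖ ∂P ≤ Real.exp (-α * t) * v t := by
    filter_upwards [ae_restrict_mem measurableSet_Ioi] with t ht
    have ht0 : 0 ≤ t := ht.le
    simp only [Y, norm_mul, Real.norm_eq_abs, Real.abs_exp, max_eq_left ht0, integral_const_mul]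
    grw [hBv t ht0]
  filter_upwards [ae_integrable_of_integral_norm_le hYmeas hYcont hYint hv hYnorm] with ω hω
  refine hω.congr ?_
  filter_upwards [ae_restrict_mem measurableSet_Ioi] with t ht
  simp only [Y, max_eq_left (Set.mem_Ioi.1 ht).le]

end SamplePaths

section FractionalBrownianMotion

variable {Ω : Type*} [MeasurableSpace Ω] {P : Measure Ω} {B : ℝ → Ω → ℝ} {t : ℝ}

lemma integral_abs_le_one_add_integral_sq [IsProbabilityMeasure P] {Y : Ω → ℝ}
    (hY : MemLp Y 2 P) : ∫ ω, |Y ω| ∂P ≤ 1 + ∫ ω, Y ω ^ 2 ∂P := by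
  calc ∫ ω, |Y ω| ∂P ≤ ∫ ω, (1 + Y ω ^ 2) ∂P := by
        refine integral_mono (hY.integrable one_le_two).abs
          ((integrable_const 1).add hY.integrable_sq) fun ω => ?_
        nlinarith [sq_nonneg (|Y ω| - 1), sq_abs (Y ω)]
    _ = 1 + ∫ ω, Y ω ^ 2 ∂P := by
        rw [integral_add (integrable_const 1) hY.integrable_sq, integral_const, probReal_univ,
          one_smul]

lemma integrableOn_exp_neg_mul_one_add_rpow {α p : ℝ} (hα : 0 < α) (hp : -1 < p) :
    IntegrableOn (fun t => Real.exp (-α * t) * (1 + t ^ p)) (Ioi 0) := by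
  have exp_integrable := integrableOn_exp_mul_Ioi (neg_neg_of_pos hα) 0
  have rpow_integrable := integrableOn_rpow_mul_exp_neg_mul_rpow hp one_pos hα
  refine (exp_integrable.add rpow_integrable).congr (ae_of_all _ fun t => ?_)
  simp only [Pi.add_apply, Real.rpow_one]
  ring

lemma hasGaussianLaw_of_forall_map_sum_mul_eq_gaussianReal
    (hB : ∀ (m : ℕ) (t : Fin m → ℝ) (c : Fin m → ℝ), (∀ i, 0 ≤ t i) →
      ∃ v : NNReal, Measure.map (fun ω => ∑ i, c i * B (t i) ω) P = gaussianReal 0 v)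
    (ht : 0 ≤ t) : HasGaussianLaw (B t) P := by
  obtain ⟨v, hv⟩ := hB 1 (fun _ => t) (fun _ => 1) fun _ => ht
  simp only [Finset.univ_unique, one_mul, Finset.sum_const, Finset.card_singleton, one_smul] at hv
  exact ⟨hv ▸ inferInstance⟩

lemma integral_sq_eq_rpow_of_fractional_covariance {H : ℝ} (hH : 0 < H)
    (hB : ∀ s t : ℝ, 0 ≤ s → 0 ≤ t →
      ∫ ω, B s ω * B t ω ∂P = 1 / 2 * (s ^ (2 * H) + t ^ (2 * H) - |t - s| ^ (2 * H)))
    (ht : 0 ≤ t) : ∫ ω, B t ω ^ 2 ∂P = t ^ (2 * H) := by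
  simp only [pow_two]
  rw [hB t t ht ht, sub_self, abs_zero, Real.zero_rpow (by positivity)]
  ring

end FractionalBrownianMotion

theorem stmt_13_general {Ω : Type*} [MeasurableSpace Ω] (P : Measure Ω) [SFinite P]
    (B : ℝ → Ω → ℝ)
    (hBmeas : ∀ t, 0 ≤ t → Measurable (B t))
    (hBcont : ∀ᵐ ω ∂P, ContinuousOn (B · ω) (Ici 0))
    (hBint : ∀ t, 0 ≤ t → Integrable (B t) P)
    (α : ℝ) (hα : 0 < α)
    (v : ℝ → ℝ) (hBv : ∀ t, 0 ≤ t → ∫ ω, |B t ω| ∂P ≤ v t)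
    (hv : IntegrableOn (fun t => Real.exp (-α * t) * v t) (Ioi 0))
    (Z : ℝ → Ω → ℝ)
    (hZ : ∀ (t : ℝ) (ω : Ω), Z t ω = ∫ s in 0..t, Real.exp (-α * s) * B s ω)
    (Zinf : Ω → ℝ)
    (hZinf : ∀ ω : Ω, Zinf ω = ∫ s in Ioi 0, Real.exp (-α * s) * B s ω)
    (T : ℝ) (hT : 0 < T)
    (L : ℝ → ℝ) (hL : IntervalIntegrable L volume 0 T) (hLper : Function.Periodic L T)
    (A : ℝ → ℝ) (hA : ∀ t : ℝ, A t = ∫ s in 0..t, Real.exp (-α * s) * L s)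
    (Ainf : ℝ) (hAinf : Ainf = A T / (1 - Real.exp (-α * T)))
    (X : ℝ → Ω → ℝ)
    (hX : ∀ (t : ℝ) (ω : Ω), X t ω = Real.exp (α * t) * A t
        + α * Real.exp (α * t) * Z t ω + B t ω)
    (φ : ℝ → ℝ) (hφ : AEStronglyMeasurable φ) (hφbdd : ∃ M : ℝ, ∀ t : ℝ, |φ t| ≤ M)
    (hφper : Function.Periodic φ T)
    (lφ : ℝ)
    (hlφ : lφ = (∫ s in 0..T, φ s * Real.exp (α * s)) / (Real.exp (α * T) - 1)) :
    ∀ᵐ ω ∂P, Tendsto (fun n : ℕ => Real.exp (-α * (n * T)) *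
        ∫ s in 0..(n * T), φ s * X s ω)
      atTop (𝓝 (lφ * (Ainf + α * Zinf ω))) := by
  filter_upwards [ae_integrableOn_exp_neg_mul_of_integral_abs_le hBmeas hBcont hBint hBv hv]
    with ω hω
  have hXω (s : ℝ) : X s ω = langevinSolution α L (B · ω) s := by
    rw [hX, hA, hZ, langevinSolution]
  simp only [hXω, hlφ, hAinf, hA, hZinf]
  exact tendsto_exp_neg_mul_integral_periodic_mul_langevinSolution hα hT hφ hφbdd hφper hL hLper hω

/-- Almost surely, as the integer `n → ∞`,
`e^{-α n} ∫_0^n φ(s) X_s ds → λ_φ · (A_∞ + α Z_∞)`. -/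
theorem stmt_13 {Ω : Type*} [MeasurableSpace Ω] (P : Measure Ω) [IsProbabilityMeasure P]
    (H : ℝ) (hH1 : 1 / 2 ≤ H) (hH2 : H < 1)
    (B : ℝ → Ω → ℝ)
    (hBmeas : ∀ t : ℝ, Measurable (B t))
    (hBgauss : ∀ (m : ℕ) (t : Fin m → ℝ) (c : Fin m → ℝ), (∀ i, 0 ≤ t i) →
      ∃ v : NNReal, Measure.map (fun ω => ∑ i, c i * B (t i) ω) P = gaussianReal 0 v)
    (hB0 : ∀ ω, B 0 ω = 0)
    (hBcov : ∀ s t : ℝ, 0 ≤ s → 0 ≤ t →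
      ∫ ω, B s ω * B t ω ∂P = 1 / 2 * (s ^ (2 * H) + t ^ (2 * H) - |t - s| ^ (2 * H)))
    (hBcont : ∀ᵐ ω ∂P, ContinuousOn (fun t => B t ω) (Set.Ici (0 : ℝ)))
    (α : ℝ) (hα : 0 < α)
    (Z : ℝ → Ω → ℝ)
    (hZ : ∀ (t : ℝ) (ω : Ω), Z t ω = ∫ s in (0:ℝ)..t, Real.exp (-α * s) * B s ω)
    (Zinf : Ω → ℝ)
    (hZinf : ∀ ω : Ω, Zinf ω = ∫ s in Set.Ioi (0:ℝ), Real.exp (-α * s) * B s ω)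
    (L : ℝ → ℝ)
    (hLmeas : Measurable L) (hLbdd : ∃ M : ℝ, ∀ t : ℝ, |L t| ≤ M)
    (hLper : ∀ t : ℝ, L (t + 1) = L t)
    (A : ℝ → ℝ) (hA : ∀ t : ℝ, A t = ∫ s in (0:ℝ)..t, Real.exp (-α * s) * L s)
    (Ainf : ℝ) (hAinf : Ainf = A 1 / (1 - Real.exp (-α)))
    (X : ℝ → Ω → ℝ)
    (hX : ∀ (t : ℝ) (ω : Ω), X t ω = Real.exp (α * t) * A t
        + α * Real.exp (α * t) * Z t ω + B t ω)
    (φ : ℝ → ℝ)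
    (hφmeas : Measurable φ) (hφbdd : ∃ M : ℝ, ∀ t : ℝ, |φ t| ≤ M)
    (hφper : ∀ t : ℝ, φ (t + 1) = φ t)
    (lφ : ℝ) (hlφ : lφ = (∫ s in (0:ℝ)..1, φ s * Real.exp (α * s)) / (Real.exp α - 1)) :
    ∀ᵐ ω ∂P, Tendsto (fun n : ℕ => Real.exp (-α * n) *
        ∫ s in (0:ℝ)..(n:ℝ), φ s * X s ω)
      atTop (nhds (lφ * (Ainf + α * Zinf ω))) := by
  have hH : 0 < H := by linarith
  have hBmemLp (t : ℝ) (ht : 0 ≤ t) : MemLp (B t) 2 P :=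
    (hasGaussianLaw_of_forall_map_sum_mul_eq_gaussianReal hBgauss ht).memLp_two
  have hBabs (t : ℝ) (ht : 0 ≤ t) : ∫ ω, |B t ω| ∂P ≤ 1 + t ^ (2 * H) := by
    rw [← integral_sq_eq_rpow_of_fractional_covariance hH hBcov ht]
    exact integral_abs_le_one_add_integral_sq (hBmemLp t ht)
  have hv : IntegrableOn (fun t => Real.exp (-α * t) * (1 + t ^ (2 * H))) (Ioi 0) :=
    integrableOn_exp_neg_mul_one_add_rpow hα (by linarith)
  have limit := stmt_13_general P B (fun t _ => hBmeas t) hBcont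
    (fun t ht => (hBmemLp t ht).integrable one_le_two) α hα _ hBabs hv Z hZ Zinf hZinf 1 one_pos
    L (intervalIntegrable_of_bdd hLmeas.aestronglyMeasurable hLbdd) hLper A hA Ainf
    (by rwa [mul_one]) X hX φ hφmeas.aestronglyMeasurable hφbdd hφper lφ (by rwa [mul_one])
  simpa only [mul_one] using limit
end

section
/- For every H ∈ (1/2, 1) and α > 0, (e^{−α n}/n^H) ∫_0^n ∫_0^n e^{α v} |u − v|^{2H−2} du dv → 0 as n → ∞; in particular, one has e^{−α n} ∫_0^n e^{α v} (n − v)^{2H−1} dv = ∫_0^n e^{−α x} x^{2H−1} dx ≤ Γ(2H)/α^{2H} for all n. -/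
open MeasureTheory Filter

/-!
The kernel `|u - v| ^ r` with `r > -1` is integrable in `u`, with integral over `[a, b] ∋ v` at most
`2 (b - a) ^ (r + 1) / (r + 1)`. Integrating this against `e ^ (α v)` costs only a factor
`e ^ (α b) / α`, so on `[0, T]` the normalised double integral is `O(T ^ (r + 1 - β))`, which tends
to `0` as soon as `β > r + 1`; for `r = 2 H - 2` and `β = H` this is the condition `H < 1`.
The second part is the substitution `x = T - v` followed by enlarging `[0, T]` to `(0, ∞)` in the
integral defining the Gamma function.
-/

section AbsRpow

variable {r : ℝ}

lemma intervalIntegrable_abs_rpow (hr : -1 < r) (a b : ℝ) :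
    IntervalIntegrable (fun x : ℝ => |x| ^ r) volume a b := by
  refine intervalIntegrable_of_even (fun x => by rw [abs_neg]) fun x hx => ?_
  refine (intervalIntegral.intervalIntegrable_rpow' hr).congr fun y hy => ?_
  rw [Set.uIoc_of_le hx.le] at hy
  simp only [abs_of_pos hy.1]

lemma integral_zero_abs_rpow (hr : -1 < r) {c : ℝ} (hc : 0 ≤ c) :
    ∫ x in (0:ℝ)..c, |x| ^ r = c ^ (r + 1) / (r + 1) := by
  calc ∫ x in (0:ℝ)..c, |x| ^ r
      = ∫ x in (0:ℝ)..c, x ^ r := intervalIntegral.integral_congr fun x hx => by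
        rw [Set.uIcc_of_le hc] at hx
        simp only [abs_of_nonneg hx.1]
    _ = c ^ (r + 1) / (r + 1) := by
        rw [integral_rpow (Or.inl hr), Real.zero_rpow (by linarith), sub_zero]

lemma integral_abs_sub_rpow (hr : -1 < r) {a b v : ℝ} (hv : v ∈ Set.Icc a b) :
    ∫ u in a..b, |u - v| ^ r = ((v - a) ^ (r + 1) + (b - v) ^ (r + 1)) / (r + 1) := by
  have integral_left : ∫ x in (a - v)..0, |x| ^ r = (v - a) ^ (r + 1) / (r + 1) := by
    rw [← integral_zero_abs_rpow hr (sub_nonneg.2 hv.1)]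
    simpa using (intervalIntegral.integral_comp_neg (a := 0) (b := v - a) (|·| ^ r)).symm
  rw [intervalIntegral.integral_comp_sub_right (|·| ^ r) v,
    ← intervalIntegral.integral_add_adjacent_intervals (intervalIntegrable_abs_rpow hr _ 0)
      (intervalIntegrable_abs_rpow hr 0 _),
    integral_left, integral_zero_abs_rpow hr (sub_nonneg.2 hv.2), add_div]

lemma integral_abs_sub_rpow_le (hr : -1 < r) {a b v : ℝ} (hv : v ∈ Set.Icc a b) :
    ∫ u in a..b, |u - v| ^ r ≤ 2 * (b - a) ^ (r + 1) / (r + 1) := by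
  have hr' : 0 < r + 1 := by linarith
  rw [integral_abs_sub_rpow hr hv, two_mul]
  gcongr
  · exact sub_nonneg.2 hv.1
  · exact hv.2
  · exact sub_nonneg.2 hv.2
  · exact hv.1

end AbsRpow

section ExpWeight

variable {α : ℝ}

lemma integral_exp_mul_le (hα : 0 < α) {a b : ℝ} (hab : a ≤ b) :
    ∫ v in a..b, Real.exp (α * v) ≤ Real.exp (α * b) / α := by
  rw [intervalIntegral.integral_of_le hab, ← integral_exp_mul_Iic hα]
  exact setIntegral_mono_set (integrableOn_exp_mul_Iic hα b)
    (Eventually.of_forall fun v => (Real.exp_pos _).le) Set.Ioc_subset_Iic_self.eventuallyLE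

lemma norm_integral_exp_mul_abs_sub_rpow_le {r a b : ℝ} (hr : -1 < r) (hα : 0 < α) (hab : a ≤ b) :
    ‖∫ v in a..b, ∫ u in a..b, Real.exp (α * v) * |u - v| ^ r‖ ≤
      Real.exp (α * b) / α * (2 * (b - a) ^ (r + 1) / (r + 1)) := by
  have hr' : 0 < r + 1 := by linarith
  have norm_inner_le : ∀ v ∈ Set.Ioc a b, ‖∫ u in a..b, Real.exp (α * v) * |u - v| ^ r‖ ≤
      Real.exp (α * v) * (2 * (b - a) ^ (r + 1) / (r + 1)) := fun v hv => by
    have kernel_nonneg : 0 ≤ ∫ u in a..b, |u - v| ^ r :=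
      intervalIntegral.integral_nonneg hab fun u _ => by positivity
    rw [intervalIntegral.integral_const_mul, Real.norm_of_nonneg (by positivity)]
    gcongr
    exact integral_abs_sub_rpow_le hr (Set.Ioc_subset_Icc_self hv)
  calc ‖∫ v in a..b, ∫ u in a..b, Real.exp (α * v) * |u - v| ^ r‖
      ≤ ∫ v in a..b, Real.exp (α * v) * (2 * (b - a) ^ (r + 1) / (r + 1)) :=
        intervalIntegral.norm_integral_le_of_norm_le hab (Eventually.of_forall norm_inner_le)
          (Continuous.intervalIntegrable (by fun_prop) a b)
    _ = (∫ v in a..b, Real.exp (α * v)) * (2 * (b - a) ^ (r + 1) / (r + 1)) :=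
        intervalIntegral.integral_mul_const _ _
    _ ≤ Real.exp (α * b) / α * (2 * (b - a) ^ (r + 1) / (r + 1)) := by
        have : 0 ≤ b - a := sub_nonneg.2 hab
        gcongr
        exact integral_exp_mul_le hα hab

lemma tendsto_exp_neg_div_rpow_mul_integral_exp_mul_abs_sub_rpow {r β : ℝ} (hr : -1 < r)
    (hβ : r + 1 < β) (hα : 0 < α) :
    Tendsto (fun T : ℝ => Real.exp (-α * T) / T ^ β *
        ∫ v in (0:ℝ)..T, ∫ u in (0:ℝ)..T, Real.exp (α * v) * |u - v| ^ r)
      atTop (nhds 0) := by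
  have bound_tendsto : Tendsto (fun T : ℝ => 2 / α / (r + 1) * T ^ (-(β - (r + 1))))
      atTop (nhds 0) := by
    simpa only [mul_zero] using (tendsto_rpow_neg_atTop (sub_pos.2 hβ)).const_mul _
  refine squeeze_zero_norm' ?_ bound_tendsto
  filter_upwards [eventually_gt_atTop 0] with T hT
  have exp_cancel : Real.exp (-α * T) * Real.exp (α * T) = 1 := by
    rw [← Real.exp_add, neg_mul, neg_add_cancel, Real.exp_zero]
  have rpow_quotient : T ^ (r + 1) / T ^ β = T ^ (-(β - (r + 1))) := by
    rw [← Real.rpow_sub hT, neg_sub]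
  rw [norm_mul, Real.norm_of_nonneg (by positivity)]
  calc Real.exp (-α * T) / T ^ β *
        ‖∫ v in (0:ℝ)..T, ∫ u in (0:ℝ)..T, Real.exp (α * v) * |u - v| ^ r‖
      ≤ Real.exp (-α * T) / T ^ β *
          (Real.exp (α * T) / α * (2 * (T - 0) ^ (r + 1) / (r + 1))) := by
        gcongr
        exact norm_integral_exp_mul_abs_sub_rpow_le hr hα hT.le
    _ = Real.exp (-α * T) * Real.exp (α * T) *
          (2 / α / (r + 1) * (T ^ (r + 1) / T ^ β)) := by
        rw [sub_zero]
        ring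
    _ = 2 / α / (r + 1) * T ^ (-(β - (r + 1))) := by
        rw [exp_cancel, one_mul, rpow_quotient]

lemma exp_neg_mul_integral_exp_mul_comp_sub (T : ℝ) (f : ℝ → ℝ) :
    Real.exp (-α * T) * ∫ v in (0:ℝ)..T, Real.exp (α * v) * f (T - v) =
      ∫ x in (0:ℝ)..T, Real.exp (-α * x) * f x := by
  calc Real.exp (-α * T) * ∫ v in (0:ℝ)..T, Real.exp (α * v) * f (T - v)
      = ∫ v in (0:ℝ)..T, Real.exp (-α * (T - v)) * f (T - v) := by
        rw [← intervalIntegral.integral_const_mul]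
        congr 1 with v
        rw [← mul_assoc, ← Real.exp_add]
        ring_nf
    _ = ∫ x in (0:ℝ)..T, Real.exp (-α * x) * f x := by
        rw [intervalIntegral.integral_comp_sub_left (fun x => Real.exp (-α * x) * f x), sub_self,
          sub_zero]

lemma integral_exp_neg_mul_rpow_le_Gamma_div {s T : ℝ} (hs : 0 < s) (hα : 0 < α) (hT : 0 ≤ T) :
    ∫ x in (0:ℝ)..T, Real.exp (-α * x) * x ^ (s - 1) ≤ Real.Gamma s / α ^ s := by
  have integrable_Ioi : IntegrableOn (fun x : ℝ => Real.exp (-α * x) * x ^ (s - 1))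
      (Set.Ioi 0) := by
    simpa only [Real.rpow_one, mul_comm] using
      integrableOn_rpow_mul_exp_neg_mul_rpow (s := s - 1) (by linarith) one_pos hα
  calc ∫ x in (0:ℝ)..T, Real.exp (-α * x) * x ^ (s - 1)
      = ∫ x in Set.Ioc 0 T, Real.exp (-α * x) * x ^ (s - 1) :=
        intervalIntegral.integral_of_le hT
    _ ≤ ∫ x in Set.Ioi 0, Real.exp (-α * x) * x ^ (s - 1) := by
        refine setIntegral_mono_set integrable_Ioi ?_ Set.Ioc_subset_Ioi_self.eventuallyLE
        filter_upwards [ae_restrict_mem measurableSet_Ioi] with x hx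
        exact mul_nonneg (Real.exp_pos _).le (Real.rpow_nonneg (le_of_lt hx) _)
    _ = Real.Gamma s / α ^ s := by
        simp_rw [mul_comm (Real.exp _), neg_mul]
        rw [Real.integral_rpow_mul_exp_neg_mul_Ioi hs hα, Real.div_rpow zero_le_one hα.le,
          Real.one_rpow, one_div_mul_eq_div]

end ExpWeight

theorem stmt_19_general {H α β : ℝ} (hH : 1 / 2 < H) (hβ : 2 * H - 1 < β) (hα : 0 < α) :
    Tendsto (fun T : ℝ => Real.exp (-α * T) / T ^ β *
        ∫ v in (0:ℝ)..T, ∫ u in (0:ℝ)..T, Real.exp (α * v) * |u - v| ^ (2 * H - 2))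
      atTop (nhds 0) ∧
    ∀ T : ℝ, 0 ≤ T →
      (Real.exp (-α * T) * ∫ v in (0:ℝ)..T, Real.exp (α * v) * (T - v) ^ (2 * H - 1)
        = ∫ x in (0:ℝ)..T, Real.exp (-α * x) * x ^ (2 * H - 1)) ∧
      (∫ x in (0:ℝ)..T, Real.exp (-α * x) * x ^ (2 * H - 1))
        ≤ Real.Gamma (2 * H) / α ^ (2 * H) :=
  ⟨tendsto_exp_neg_div_rpow_mul_integral_exp_mul_abs_sub_rpow (by linarith) (by linarith) hα,
    fun T hT => ⟨exp_neg_mul_integral_exp_mul_comp_sub T (· ^ (2 * H - 1)),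
      integral_exp_neg_mul_rpow_le_Gamma_div (by linarith) hα hT⟩⟩

/-- For `H ∈ (1/2, 1)` and `α > 0`,
`(e^{-α n} / n^H) ∫_0^n ∫_0^n e^{α v} |u - v|^{2H-2} du dv → 0` as `n → ∞`;
moreover `e^{-α n} ∫_0^n e^{α v} (n - v)^{2H-1} dv = ∫_0^n e^{-α x} x^{2H-1} dx
≤ Γ(2H) / α^{2H}` for all `n`. -/
theorem stmt_19 (H α : ℝ) (hH1 : 1 / 2 < H) (hH2 : H < 1) (hα : 0 < α) :
    Tendsto (fun n : ℕ => Real.exp (-α * n) / (n : ℝ) ^ H *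
        ∫ v in (0:ℝ)..(n:ℝ), ∫ u in (0:ℝ)..(n:ℝ),
          Real.exp (α * v) * |u - v| ^ (2 * H - 2))
      atTop (nhds 0) ∧
    ∀ n : ℕ,
      (Real.exp (-α * n) *
          ∫ v in (0:ℝ)..(n:ℝ), Real.exp (α * v) * ((n : ℝ) - v) ^ (2 * H - 1)
        = ∫ x in (0:ℝ)..(n:ℝ), Real.exp (-α * x) * x ^ (2 * H - 1)) ∧
      (∫ x in (0:ℝ)..(n:ℝ), Real.exp (-α * x) * x ^ (2 * H - 1))
        ≤ Real.Gamma (2 * H) / α ^ (2 * H) := by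
  have real_version := stmt_19_general hH1 (show 2 * H - 1 < H by linarith) hα
  exact ⟨real_version.1.comp tendsto_natCast_atTop_atTop, fun n => real_version.2 n n.cast_nonneg⟩
end
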